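/- For α ∈ L^+: α ∈ Σ̃_λ if and only if α ≠ 0, α ∈ ℕR̃^+_λ, and (β, α−β) ≤ −2 whenever β and α−β are both nonzero elements of ℕR̃^+_λ. -/

import Mathlib

open Polynomial Matrix BigOperators

namespace DS

noncomputable section

/-- The data of a collection of HTL normal forms `B⁽ⁱ⁾`, `i = 0,…,p`, on `ℂⁿ`:
block counts `m i`, pole orders `kk i`, block sizes `nn i j`, irregular parts
`q i j ∈ s²ℂ[s]` (pairwise distinct, degree ≤ kk i), residue blocks `R i j`,
chosen annihilating eigenvalue lists `ξ i j`, and an identification of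
`Σ j, Fin (nn i j)` with `Fin n` (the block decomposition of `ℂⁿ`). -/
structure Setup where
  p : ℕ
  n : ℕ
  hn : 0 < n
  m : Fin (p+1) → ℕ
  hm : ∀ i, 0 < m i
  kk : Fin (p+1) → ℕ
  hkk : ∀ i, 0 < kk i
  nn : ∀ i : Fin (p+1), Fin (m i) → ℕ
  q : ∀ i : Fin (p+1), Fin (m i) → Polynomial ℂ
  hq0 : ∀ i j, (q i j).coeff 0 = 0
  hq1 : ∀ i j, (q i j).coeff 1 = 0
  hqdeg : ∀ i j, (q i j).natDegree ≤ kk i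
  hqdist : ∀ i : Fin (p+1), ∀ j j' : Fin (m i), j ≠ j' → q i j ≠ q i j'
  e : ∀ i : Fin (p+1), Fin (m i) → ℕ
  he : ∀ i j, 0 < e i j
  xi : ∀ (i : Fin (p+1)) (j : Fin (m i)), Fin (e i j) → ℂ
  R : ∀ (i : Fin (p+1)) (j : Fin (m i)), Matrix (Fin (nn i j)) (Fin (nn i j)) ℂ
  hxi : ∀ i j, (((List.finRange (e i j)).map fun l => R i j - xi i j l • 1).prod) = 0
  emb : ∀ i : Fin (p+1), (Σ j : Fin (m i), Fin (nn i j)) ≃ Fin n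
  hreg : ∀ i : Fin (p+1), ¬ (1 < m i ∨ i = 0) → kk i = 1

/-- `i ∈ I_irr` : the indices of irregular singular points together with `0`. -/
def Iirr (S : Setup) (i : Fin (S.p+1)) : Prop := 1 < S.m i ∨ i = 0

instance (S : Setup) : DecidablePred (Iirr S) := fun i =>
  inferInstanceAs (Decidable (1 < S.m i ∨ i = 0))

/-- Vertices `[i,j]` for `i ∈ I_irr`. -/
abbrev Vb (S : Setup) := Σ i : {i : Fin (S.p+1) // Iirr S i}, Fin (S.m i.1)

/-- Vertices `[i,j,k]` for `0 ≤ i ≤ p`, `1 ≤ j ≤ m⁽ⁱ⁾`, `1 ≤ k ≤ e[i,j]-1`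
(the third component `κ` encodes `k = κ+1`). -/
abbrev Vr (S : Setup) := Σ i : Fin (S.p+1), Σ j : Fin (S.m i), Fin (S.e i j - 1)

/-- The vertex set `Q₀` of the quiver `Q`. -/
abbrev V (S : Setup) := Vb S ⊕ Vr S

/-- `d_i(j,j') = deg (q_j - q_j') - 2`. -/
def dcnt (S : Setup) (i : Fin (S.p+1)) (j j' : Fin (S.m i)) : ℕ :=
  (S.q i j - S.q i j').natDegree - 2

/-- The number of arrows of `Q` from a vertex `a` to a vertex `b`. -/
def arr (S : Setup) : V S → V S → ℕ
  | .inl ⟨i, j⟩, .inl ⟨i', j'⟩ =>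
      (if i.1 = 0 ∧ i'.1 ≠ 0 then 1 else 0) +
      (if h : i = i' then
        (if (j : ℕ) < (j' : ℕ) then dcnt S i.1 j (Fin.cast (by rw [h]) j') else 0)
       else 0)
  | .inl _, .inr _ => 0
  | .inr ⟨i, j, κ⟩, .inl ⟨i', j'⟩ =>
      (if i = i'.1 ∧ (j : ℕ) = (j' : ℕ) ∧ (κ : ℕ) = 0 then 1 else 0) +
      (if ¬ Iirr S i ∧ i'.1 = 0 ∧ (j : ℕ) = 0 ∧ (κ : ℕ) = 0 then 1 else 0)
  | .inr ⟨i, j, κ⟩, .inr ⟨i', j', κ'⟩ =>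
      if i = i' ∧ (j : ℕ) = (j' : ℕ) ∧ (κ : ℕ) = (κ' : ℕ) + 1 then 1 else 0

/-- The Euler form `⟨β,γ⟩` of the quiver `Q`. -/
def eform (S : Setup) (β γ : V S → ℤ) : ℤ :=
  (∑ a : V S, β a * γ a) - ∑ a : V S, ∑ b : V S, (arr S a b : ℤ) * β a * γ b

/-- The symmetrized bilinear form `(β,γ)`. -/
def bform (S : Setup) (β γ : V S → ℤ) : ℤ := eform S β γ + eform S γ β

/-- The quadratic form `q(β)`. -/
def qform (S : Setup) (β : V S → ℤ) : ℤ := eform S β β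

/-- `p(β) = 1 - q(β)`. -/
def pform (S : Setup) (β : V S → ℤ) : ℤ := 1 - qform S β

/-- The coordinate vector `ε_a`. -/
def eps (S : Setup) (a : V S) : V S → ℤ := fun b => if b = a then 1 else 0

/-- The fundamental reflection `s_a`. -/
def refl1 (S : Setup) (a : V S) (β : V S → ℤ) : V S → ℤ :=
  fun b => β b - bform S β (eps S a) * eps S a b

/-- Iterated fundamental reflections (a Weyl group element). -/
def reflList (S : Setup) (l : List (V S)) (β : V S → ℤ) : V S → ℤ :=
  l.foldr (refl1 S) β

/-- The support of a vector. -/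
def supp (S : Setup) (β : V S → ℤ) : Set (V S) := {a | β a ≠ 0}

/-- The support of `β` is connected in the underlying graph of `Q`. -/
def connSupp (S : Setup) (β : V S → ℤ) : Prop :=
  ∀ a ∈ supp S β, ∀ b ∈ supp S β,
    Relation.ReflTransGen
      (fun x y => (0 < arr S x y + arr S y x) ∧ x ∈ supp S β ∧ y ∈ supp S β) a b

/-- The fundamental set of the root system of `Q` (all vertices of `Q` are loop-free). -/
def fund (S : Setup) (β : V S → ℤ) : Prop :=
  β ≠ 0 ∧ (∀ a, 0 ≤ β a) ∧ connSupp S β ∧ ∀ a : V S, bform S β (eps S a) ≤ 0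

/-- Real roots of `Q`. -/
def isRealRoot (S : Setup) (β : V S → ℤ) : Prop :=
  ∃ (l : List (V S)) (a : V S), β = reflList S l (eps S a)

/-- Imaginary roots of `Q`. -/
def isImagRoot (S : Setup) (β : V S → ℤ) : Prop :=
  ∃ (l : List (V S)) (γ : V S → ℤ), (fund S γ ∨ fund S (-γ)) ∧ β = reflList S l γ

/-- Roots of `Q`. -/
def isRoot (S : Setup) (β : V S → ℤ) : Prop := isRealRoot S β ∨ isImagRoot S β

/-- Positive roots of `Q`. -/
def isPosRoot (S : Setup) (β : V S → ℤ) : Prop := isRoot S β ∧ ∀ a, 0 ≤ β a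

/-- The index `0` as an element of `I_irr`. -/
def i0 (S : Setup) : {i : Fin (S.p+1) // Iirr S i} := ⟨0, Or.inr rfl⟩

/-- The vertex `[0,j]`. -/
def v0 (S : Setup) (j : Fin (S.m 0)) : V S := Sum.inl ⟨i0 S, j⟩

/-- The vertex `[i,j]` for `i ∈ I_irr`. -/
def vI (S : Setup) (i : {i : Fin (S.p+1) // Iirr S i}) (j : Fin (S.m i.1)) : V S :=
  Sum.inl ⟨i, j⟩

/-- The lattice `L`: `Σ_j β_[0,j] = Σ_j β_[i,j]` for all `i ∈ I_irr ∖ {0}`. -/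
def inL (S : Setup) (β : V S → ℤ) : Prop :=
  ∀ i : {i : Fin (S.p+1) // Iirr S i}, i.1 ≠ 0 →
    (∑ j : Fin (S.m 0), β (v0 S j)) = ∑ j : Fin (S.m i.1), β (vI S i j)

/-- `L⁺ = L ∩ (ℤ≥0)^{Q₀}`. -/
def inLpos (S : Setup) (β : V S → ℤ) : Prop := inL S β ∧ ∀ a, 0 ≤ β a

/-- The dimension vector `α` (as natural numbers):
`α_[i,j] = n⁽ⁱ⁾_j`, `α_[i,j,k] = rank ∏_{l=1}^k (R⁽ⁱ⁾_j - ξ^{[i,j]}_l)`. -/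
noncomputable def alN (S : Setup) : V S → ℕ
  | .inl ⟨i, j⟩ => S.nn i.1 j
  | .inr ⟨i, j, κ⟩ =>
      ((((List.finRange (S.e i j)).take ((κ : ℕ) + 1)).map
          fun l => S.R i j - S.xi i j l • 1).prod).rank

/-- The dimension vector `α` as an integer vector. -/
noncomputable def alZ (S : Setup) : V S → ℤ := fun a => (alN S a : ℤ)

/-- The parameter `λ ∈ ℂ^{Q₀}`. -/
noncomputable def lam (S : Setup) : V S → ℂ
  | .inl ⟨i, j⟩ =>
      if h : i.1 = 0 then
        (- S.xi 0 (Fin.cast (by rw [h]) j) ⟨0, S.he 0 (Fin.cast (by rw [h]) j)⟩)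
          - ∑ i' ∈ Finset.univ.filter (fun i' : Fin (S.p+1) => ¬ Iirr S i'),
              S.xi i' ⟨0, S.hm i'⟩ ⟨0, S.he i' ⟨0, S.hm i'⟩⟩
      else - S.xi i.1 j ⟨0, S.he i.1 j⟩
  | .inr ⟨i, j, κ⟩ =>
      S.xi i j ⟨(κ : ℕ), by have := κ.2; omega⟩
        - S.xi i j ⟨(κ : ℕ) + 1, by have := κ.2; omega⟩

/-- Pairing `β · μ = Σ_a β_a μ_a` between `ℤ^{Q₀}` and `ℂ^{Q₀}`. -/
noncomputable def dotC (S : Setup) (β : V S → ℤ) (μ : V S → ℂ) : ℂ :=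
  ∑ a : V S, (β a : ℂ) * μ a

/-- `β ∈ R̃⁺_μ` : positive roots of `Q` lying in `L` with `β·μ = 0`. -/
def inRt (S : Setup) (μ : V S → ℂ) (β : V S → ℤ) : Prop :=
  isPosRoot S β ∧ inL S β ∧ dotC S β μ = 0

/-- `β ∈ ℕR̃⁺_μ` : finite sums (including `0`) of elements of `R̃⁺_μ`. -/
def inNRt (S : Setup) (μ : V S → ℂ) (β : V S → ℤ) : Prop :=
  ∃ (r : ℕ) (γ : Fin r → (V S → ℤ)), (∀ t, inRt S μ (γ t)) ∧ β = ∑ t, γ t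

/-- `β ∈ Σ̃_μ`. -/
def inSig (S : Setup) (μ : V S → ℂ) (β : V S → ℤ) : Prop :=
  inRt S μ β ∧ ∀ (r : ℕ), 2 ≤ r → ∀ γ : Fin r → (V S → ℤ),
    (∀ t, inRt S μ (γ t)) → β = ∑ t, γ t → (∑ t, pform S (γ t)) < pform S β

/-! ### The matrix side: truncated orbits.

An element `Σ_{j=1}^{k} A_j x^{-j}` of `𝔤_k*` is encoded as the polynomial matrix
`Σ_{j=1}^{k} A_j x^{k-j}` (of degree `< k`); the coadjoint `G_k`-action becomes
conjugation modulo `x^k` by polynomial matrices with invertible constant term. -/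

abbrev PMat (S : Setup) := Matrix (Fin S.n) (Fin S.n) (Polynomial ℂ)

/-- All entries have degree `< k`. -/
def degLT (S : Setup) (k : ℕ) (A : PMat S) : Prop :=
  ∀ a b, (A a b).degree < (k : ℕ)

/-- The HTL normal form `B⁽ⁱ⁾`, in the polynomial encoding. -/
noncomputable def Bmat (S : Setup) (i : Fin (S.p+1)) : PMat S :=
  Matrix.of fun a b =>
    if h : ((S.emb i).symm a).1 = ((S.emb i).symm b).1 then
      (if Fin.cast (by rw [h]) ((S.emb i).symm a).2 = ((S.emb i).symm b).2 then
          Polynomial.reflect (S.kk i) (S.q i ((S.emb i).symm b).1)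
        else 0)
        + Polynomial.C
            (S.R i ((S.emb i).symm b).1 (Fin.cast (by rw [h]) ((S.emb i).symm a).2)
              ((S.emb i).symm b).2)
          * Polynomial.X ^ (S.kk i - 1)
    else 0

/-- Membership in the truncated orbit `𝒪_{B⁽ⁱ⁾}`. -/
def inOrbit (S : Setup) (i : Fin (S.p+1)) (A : PMat S) : Prop :=
  degLT S (S.kk i) A ∧
  ∃ g : PMat S, IsUnit (g.map fun r => r.coeff 0) ∧
    ∀ a b, (Polynomial.X ^ (S.kk i) : Polynomial ℂ) ∣ (g * Bmat S i - A * g) a b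

/-- The residue matrix `A⁽ⁱ⁾₁`. -/
def resMat (S : Setup) (i : Fin (S.p+1)) (A : PMat S) : Matrix (Fin S.n) (Fin S.n) ℂ :=
  Matrix.of fun a b => (A a b).coeff (S.kk i - 1)

/-- `(A⁽ⁱ⁾)_{0≤i≤p} ∈ ∏ 𝒪_{B⁽ⁱ⁾}` with `Σ A⁽ⁱ⁾₁ = 0`. -/
def isDSElem (S : Setup) (A : ∀ _ : Fin (S.p+1), PMat S) : Prop :=
  (∀ i, inOrbit S i (A i)) ∧ (∑ i, resMat S i (A i)) = 0

/-- Irreducibility of the collection of all coefficient matrices `A⁽ⁱ⁾_j`. -/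
def irredTuple (S : Setup) (A : ∀ _ : Fin (S.p+1), PMat S) : Prop :=
  ∀ W : Submodule ℂ (Fin S.n → ℂ),
    (∀ (i : Fin (S.p+1)) (l : ℕ), ∀ v ∈ W,
        (Matrix.of fun a b => (A i a b).coeff l).mulVec v ∈ W) →
    W = ⊥ ∨ W = ⊤

/-! ### Representations of the double quiver -/

/-- A representation of the double quiver `Q̄` with dimension vector `β`:
`f a b ρ` is the matrix of `ψ_ρ : ℂ^{β a} → ℂ^{β b}` and `g a b ρ` the matrix of
`ψ_{ρ*} : ℂ^{β b} → ℂ^{β a}`, for the `ρ`-th arrow `a → b` of `Q`. -/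
structure Rep (S : Setup) (β : V S → ℕ) where
  f : ∀ a b : V S, Fin (arr S a b) → Matrix (Fin (β b)) (Fin (β a)) ℂ
  g : ∀ a b : V S, Fin (arr S a b) → Matrix (Fin (β a)) (Fin (β b)) ℂ

/-- The moment map at a vertex `c`. -/
noncomputable def moment (S : Setup) {β : V S → ℕ} (M : Rep S β) (c : V S) :
    Matrix (Fin (β c)) (Fin (β c)) ℂ :=
  (∑ a : V S, ∑ ρ : Fin (arr S a c), M.f a c ρ * M.g a c ρ)
    - ∑ b : V S, ∑ ρ : Fin (arr S c b), M.g c b ρ * M.f c b ρ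

/-- `M ∈ Rep(Q̄,β)_μ`. -/
def onMu (S : Setup) {β : V S → ℕ} (μ : V S → ℂ) (M : Rep S β) : Prop :=
  ∀ c : V S, moment S M c = μ c • (1 : Matrix (Fin (β c)) (Fin (β c)) ℂ)

/-- The block matrix `(ψ_{ρ^{[0,j]}_{[i,j']}})_{j,j'}` for `i ∈ I_irr ∖ {0}`. -/
noncomputable def crossMat (S : Setup) {β : V S → ℕ} (M : Rep S β)
    (i : {i : Fin (S.p+1) // Iirr S i}) :
    Matrix (Σ j' : Fin (S.m i.1), Fin (β (vI S i j'))) (Σ j : Fin (S.m 0), Fin (β (v0 S j))) ℂ :=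
  Matrix.of fun x y =>
    if h : 0 < arr S (v0 S y.1) (vI S i x.1) then
      M.f (v0 S y.1) (vI S i x.1) ⟨0, h⟩ x.2 y.2
    else 0

/-- All the block matrices `(ψ_{ρ^{[0,j]}_{[i,j']}})` for `i ∈ I_irr ∖ {0}` are invertible. -/
def crossBij (S : Setup) {β : V S → ℕ} (M : Rep S β) : Prop :=
  ∀ i : {i : Fin (S.p+1) // Iirr S i}, i.1 ≠ 0 →
    Function.Bijective ((crossMat S M i).mulVec)

/-- The combined map `(ψ_{ρ^{[i,1,1]}_{[0,j]}})_j : ℂ^{β [i,1,1]} → ⊕_j ℂ^{β [0,j]}`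
(for `i ∈ I_reg`). -/
noncomputable def regMatF (S : Setup) {β : V S → ℕ} (M : Rep S β)
    (i : Fin (S.p+1)) (j : Fin (S.m i)) (κ : Fin (S.e i j - 1)) :
    Matrix (Σ j' : Fin (S.m 0), Fin (β (v0 S j'))) (Fin (β (Sum.inr ⟨i, j, κ⟩))) ℂ :=
  Matrix.of fun x y =>
    if h : 0 < arr S (Sum.inr ⟨i, j, κ⟩) (v0 S x.1) then
      M.f (Sum.inr ⟨i, j, κ⟩) (v0 S x.1) ⟨0, h⟩ x.2 y
    else 0

/-- The combined map `(ψ_{(ρ^{[i,1,1]}_{[0,j]})*})_j : ⊕_j ℂ^{β [0,j]} → ℂ^{β [i,1,1]}`. -/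
noncomputable def regMatG (S : Setup) {β : V S → ℕ} (M : Rep S β)
    (i : Fin (S.p+1)) (j : Fin (S.m i)) (κ : Fin (S.e i j - 1)) :
    Matrix (Fin (β (Sum.inr ⟨i, j, κ⟩))) (Σ j' : Fin (S.m 0), Fin (β (v0 S j'))) ℂ :=
  Matrix.of fun y x =>
    if h : 0 < arr S (Sum.inr ⟨i, j, κ⟩) (v0 S x.1) then
      M.g (Sum.inr ⟨i, j, κ⟩) (v0 S x.1) ⟨0, h⟩ y x.2
    else 0

/-- `M ∈ Rep(Q̄,β)_μ^{dif}` (the open conditions). -/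
def difCond (S : Setup) {β : V S → ℕ} (M : Rep S β) : Prop :=
  crossBij S M ∧
  (∀ (i : Fin (S.p+1)), ¬ Iirr S i → ∀ (j : Fin (S.m i)) (κ : Fin (S.e i j - 1)),
      (κ : ℕ) = 0 →
      Function.Injective ((regMatF S M i j κ).mulVec) ∧
      Function.Surjective ((regMatG S M i j κ).mulVec)) ∧
  (∀ (i : Fin (S.p+1)) (j : Fin (S.m i)) (κ : Fin (S.e i j - 1)) (b : V S)
      (ρ : Fin (arr S (Sum.inr ⟨i, j, κ⟩) b)),
      (¬ Iirr S i ∧ (κ : ℕ) = 0) ∨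
      (Function.Injective ((M.f (Sum.inr ⟨i, j, κ⟩) b ρ).mulVec) ∧
       Function.Surjective ((M.g (Sum.inr ⟨i, j, κ⟩) b ρ).mulVec)))

/-- A family of subspaces forming a subrepresentation of `M`. -/
def isSubrep (S : Setup) {β : V S → ℕ} (M : Rep S β)
    (W : ∀ a : V S, Submodule ℂ (Fin (β a) → ℂ)) : Prop :=
  ∀ (a b : V S) (ρ : Fin (arr S a b)),
    (∀ v ∈ W a, (M.f a b ρ).mulVec v ∈ W b) ∧ (∀ v ∈ W b, (M.g a b ρ).mulVec v ∈ W a)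

/-- Irreducibility of a representation. -/
def irredRep (S : Setup) {β : V S → ℕ} (M : Rep S β) : Prop :=
  ∀ W, isSubrep S M W → (∀ a, W a = ⊥) ∨ (∀ a, W a = ⊤)

/-- A dimension vector is balanced if `Σ_j γ_[0,j] = Σ_j γ_[i,j]` for all `i ∈ I_irr∖{0}`. -/
def balanced (S : Setup) (γ : V S → ℕ) : Prop :=
  ∀ i : {i : Fin (S.p+1) // Iirr S i}, i.1 ≠ 0 →
    (∑ j : Fin (S.m 0), γ (v0 S j)) = ∑ j : Fin (S.m i.1), γ (vI S i j)

/-- Quasi-irreducibility: no nontrivial proper subrepresentation with balanced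
dimension vector. -/
def quasiIrred (S : Setup) {β : V S → ℕ} (M : Rep S β) : Prop :=
  ∀ W, isSubrep S M W → balanced S (fun a => Module.finrank ℂ (W a)) →
    (∀ a, W a = ⊥) ∨ (∀ a, W a = ⊤)

/-- Simultaneous conjugation of representations by `∏_a GL(β_a, ℂ)`. -/
def repConj (S : Setup) {β : V S → ℕ} (M N : Rep S β) : Prop :=
  ∃ g : ∀ a : V S, (Matrix (Fin (β a)) (Fin (β a)) ℂ)ˣ,
    (∀ a b ρ, N.f a b ρ = ((g b).val * M.f a b ρ) * ((g a)⁻¹).val) ∧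
    (∀ a b ρ, N.g a b ρ = ((g a).val * M.g a b ρ) * ((g b)⁻¹).val)

/-- Simultaneous conjugation of tuples by `GL(n, ℂ)`. -/
def tupConj (S : Setup) (A A' : ∀ _ : Fin (S.p+1), PMat S) : Prop :=
  ∃ g : (Matrix (Fin S.n) (Fin S.n) ℂ)ˣ,
    ∀ i, A' i = (g.val.map Polynomial.C) * A i * ((g⁻¹).val.map Polynomial.C)

/-- Carrier of the moduli space `ℳ*_{st}(𝐁)`. -/
abbrev MstC (S : Setup) := {A : ∀ _ : Fin (S.p+1), PMat S // isDSElem S A ∧ irredTuple S A}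

/-- The moduli space `ℳ*_{st}(𝐁)` of stable connections, identified with conjugacy
classes of irreducible elements of `∏ 𝒪_{B⁽ⁱ⁾}` with vanishing residue sum. -/
abbrev Mst (S : Setup) := Quot (fun A A' : MstC S => tupConj S A.1 A'.1)

abbrev DSC (S : Setup) := {A : ∀ _ : Fin (S.p+1), PMat S // isDSElem S A}

abbrev DSQ (S : Setup) := Quot (fun A A' : DSC S => tupConj S A.1 A'.1)

abbrev RepIrrC (S : Setup) (μ : V S → ℂ) :=
  {M : Rep S (alN S) // onMu S μ M ∧ irredRep S M}

/-- The quiver variety `𝔐^{reg}_μ(Q,α)`. -/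
abbrev Mreg (S : Setup) (μ : V S → ℂ) :=
  Quot (fun M N : RepIrrC S μ => repConj S M.1 N.1)

abbrev DifC (S : Setup) (μ : V S → ℂ) :=
  {M : Rep S (alN S) // onMu S μ M ∧ difCond S M}

abbrev DifQ (S : Setup) (μ : V S → ℂ) :=
  Quot (fun M N : DifC S μ => repConj S M.1 N.1)

abbrev QIC (S : Setup) (μ : V S → ℂ) :=
  {M : Rep S (alN S) // onMu S μ M ∧ quasiIrred S M ∧ crossBij S M}

abbrev QIQ (S : Setup) (μ : V S → ℂ) :=
  Quot (fun M N : QIC S μ => repConj S M.1 N.1)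

/-! ### `J`, `ε_𝐢`, and the equivalence relation `∼` -/

/-- `ε_𝐢 = Σ_{i ∈ I_irr} ε_{[i,j_i]}` for `𝐢 = ([i,j_i]) ∈ 𝒥`. -/
def epsJ (S : Setup) (I : ∀ i : Fin (S.p+1), Fin (S.m i)) : V S → ℤ
  | .inl ⟨i, j⟩ => if (j : ℕ) = (I i.1 : ℕ) then 1 else 0
  | .inr _ => 0

/-- The reflection `s_𝐢`. -/
def sJ (S : Setup) (I : ∀ i : Fin (S.p+1), Fin (S.m i)) (β : V S → ℤ) : V S → ℤ :=
  fun b => β b - bform S β (epsJ S I) * epsJ S I b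

/-- The quasi-fundamental set `F̃`. -/
def quasiFund (S : Setup) (β : V S → ℤ) : Prop :=
  inL S β ∧ (∀ a, 0 ≤ β a) ∧ β ≠ 0 ∧
  (∀ I : ∀ i : Fin (S.p+1), Fin (S.m i), bform S β (epsJ S I) ≤ 0) ∧
  (∀ (i : Fin (S.p+1)) (j : Fin (S.m i)) (κ : Fin (S.e i j - 1)),
      bform S β (eps S (Sum.inr ⟨i, j, κ⟩)) ≤ 0) ∧
  connSupp S β

/-- `μ_𝐢 = Σ_{i ∈ I_irr} μ_{[i,j_i]}`. -/
noncomputable def muJ (S : Setup) (I : ∀ i : Fin (S.p+1), Fin (S.m i)) (μ : V S → ℂ) : ℂ :=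
  ∑ i : {i : Fin (S.p+1) // Iirr S i}, μ (vI S i (I i.1))

/-- The transformed parameter `μ'` in the move `s_𝐢` on pairs. -/
noncomputable def muMove (S : Setup) (I : ∀ i : Fin (S.p+1), Fin (S.m i)) (μ : V S → ℂ) :
    V S → ℂ := fun a =>
  match a with
  | .inl ⟨i, j⟩ =>
      if i.1 = 0 ∧ (j : ℕ) = (I 0 : ℕ) then μ a - 2 * muJ S I μ else μ a
  | .inr ⟨i, j, κ⟩ =>
      if j = I i ∧ (κ : ℕ) = 0 then μ a + muJ S I μ else μ a

/-- The reflected parameter `r_a(μ)` for a vertex `a`. -/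
noncomputable def rvtx (S : Setup) (a : V S) (μ : V S → ℂ) : V S → ℂ :=
  fun b => μ b - ((bform S (eps S a) (eps S b) : ℤ) : ℂ) * μ a

/-- One move generating the relation `∼` on pairs `(β,μ)`. -/
def stepRel (S : Setup) :
    ((V S → ℤ) × (V S → ℂ)) → ((V S → ℤ) × (V S → ℂ)) → Prop := fun x y =>
  (∃ (i : Fin (S.p+1)) (j : Fin (S.m i)) (κ : Fin (S.e i j - 1)),
      x.2 (Sum.inr ⟨i, j, κ⟩) ≠ 0 ∧
      y = (refl1 S (Sum.inr ⟨i, j, κ⟩) x.1, rvtx S (Sum.inr ⟨i, j, κ⟩) x.2)) ∨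
  (∃ I : ∀ i : Fin (S.p+1), Fin (S.m i),
      muJ S I x.2 ≠ 0 ∧ y = (sJ S I x.1, muMove S I x.2))

/-- The smallest equivalence relation `∼` containing all the moves. -/
def pairEquiv (S : Setup) :
    ((V S → ℤ) × (V S → ℂ)) → ((V S → ℤ) × (V S → ℂ)) → Prop :=
  Relation.EqvGen (stepRel S)

/-- The vector `z^{(i₀)}` for `i₀ ∈ I_irr ∖ {0}`. -/
def zvec (S : Setup) (i' : Fin (S.p+1)) : V S → ℂ
  | .inl ⟨i, _⟩ => if i.1 = i' then 1 else if i.1 = 0 then -1 else 0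
  | .inr _ => 0

/-! ### Auxiliary lemmas: the bilinear form -/

lemma eform_add_left (S : Setup) (x y z : V S → ℤ) :
    eform S (x + y) z = eform S x z + eform S y z := by
  simp only [eform, Pi.add_apply, add_mul, mul_add, Finset.sum_add_distrib]
  ring

lemma eform_add_right (S : Setup) (x y z : V S → ℤ) :
    eform S x (y + z) = eform S x y + eform S x z := by
  simp only [eform, Pi.add_apply, mul_add, Finset.sum_add_distrib]
  ring

lemma eform_smul_left (S : Setup) (c : ℤ) (x z : V S → ℤ) :
    eform S (c • x) z = c * eform S x z := by
  simp only [eform, Pi.smul_apply, smul_eq_mul, mul_sub, Finset.mul_sum]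
  congr 1
  · exact Finset.sum_congr rfl fun a _ => by ring
  · exact Finset.sum_congr rfl fun a _ => Finset.sum_congr rfl fun b _ => by ring

lemma eform_smul_right (S : Setup) (c : ℤ) (x z : V S → ℤ) :
    eform S x (c • z) = c * eform S x z := by
  simp only [eform, Pi.smul_apply, smul_eq_mul, mul_sub, Finset.mul_sum]
  congr 1
  · exact Finset.sum_congr rfl fun a _ => by ring
  · exact Finset.sum_congr rfl fun a _ => Finset.sum_congr rfl fun b _ => by ring

lemma bform_symm (S : Setup) (x y : V S → ℤ) : bform S x y = bform S y x := by
  unfold bform; ring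

lemma bform_add_left (S : Setup) (x y z : V S → ℤ) :
    bform S (x + y) z = bform S x z + bform S y z := by
  unfold bform; rw [eform_add_left, eform_add_right]; ring

lemma bform_smul_left (S : Setup) (c : ℤ) (x z : V S → ℤ) :
    bform S (c • x) z = c * bform S x z := by
  unfold bform; rw [eform_smul_left, eform_smul_right]; ring

/-- The symmetric form as a linear map in the first variable. -/
def bL (S : Setup) (z : V S → ℤ) : (V S → ℤ) →ₗ[ℤ] ℤ where
  toFun x := bform S x z
  map_add' x y := bform_add_left S x y z
  map_smul' c x := by simpa using bform_smul_left S c x z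

lemma bL_apply (S : Setup) (x z : V S → ℤ) : bL S z x = bform S x z := rfl

lemma bform_sub_left (S : Setup) (x y z : V S → ℤ) :
    bform S (x - y) z = bform S x z - bform S y z := (bL S z).map_sub x y

lemma bform_neg_left (S : Setup) (x z : V S → ℤ) :
    bform S (-x) z = - bform S x z := (bL S z).map_neg x

lemma bform_zero_left (S : Setup) (z : V S → ℤ) :
    bform S 0 z = 0 := (bL S z).map_zero

lemma bform_sum_left (S : Setup) {ι : Type*} (s : Finset ι) (f : ι → V S → ℤ) (z : V S → ℤ) :
    bform S (∑ i ∈ s, f i) z = ∑ i ∈ s, bform S (f i) z := map_sum (bL S z) f s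

lemma bform_add_right (S : Setup) (x y z : V S → ℤ) :
    bform S x (y + z) = bform S x y + bform S x z := by
  rw [bform_symm, bform_add_left, bform_symm S y, bform_symm S z]

lemma bform_sub_right (S : Setup) (x y z : V S → ℤ) :
    bform S x (y - z) = bform S x y - bform S x z := by
  rw [bform_symm, bform_sub_left, bform_symm S y, bform_symm S z]

lemma bform_smul_right (S : Setup) (c : ℤ) (x z : V S → ℤ) :
    bform S x (c • z) = c * bform S x z := by
  rw [bform_symm, bform_smul_left, bform_symm S z]

lemma bform_sum_right (S : Setup) {ι : Type*} (s : Finset ι) (f : ι → V S → ℤ) (z : V S → ℤ) :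
    bform S z (∑ i ∈ s, f i) = ∑ i ∈ s, bform S z (f i) := by
  rw [bform_symm, bform_sum_left]
  exact Finset.sum_congr rfl fun i _ => bform_symm S _ _

lemma eform_eps (S : Setup) (a b : V S) :
    eform S (eps S a) (eps S b) = (if a = b then 1 else 0) - (arr S a b : ℤ) := by
  unfold eform eps
  simp [eq_comm]

lemma arr_self (S : Setup) (a : V S) : arr S a a = 0 := by
  rcases a with ⟨i, j⟩ | ⟨i, j, κ⟩
  · simp [arr]
  · simp [arr]

lemma bform_eps_self (S : Setup) (a : V S) : bform S (eps S a) (eps S a) = 2 := by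
  simp [bform, eform_eps, arr_self]

lemma bform_eps_ne (S : Setup) {a b : V S} (h : a ≠ b) :
    bform S (eps S a) (eps S b) = -((arr S a b + arr S b a : ℕ) : ℤ) := by
  simp [bform, eform_eps, h, h.symm]
  ring

lemma eq_sum_eps (S : Setup) (x : V S → ℤ) : x = ∑ a, x a • eps S a := by
  funext b
  simp [eps, Finset.sum_apply]

lemma bform_eq_sum (S : Setup) (x z : V S → ℤ) :
    bform S x z = ∑ a, x a * bform S (eps S a) z := by
  conv_lhs => rw [eq_sum_eps S x]
  rw [bform_sum_left]
  exact Finset.sum_congr rfl fun a _ => bform_smul_left S _ _ _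

lemma qform_two (S : Setup) (x : V S → ℤ) : bform S x x = 2 * qform S x := by
  unfold bform qform; ring

lemma pform_add (S : Setup) (x y : V S → ℤ) :
    pform S (x + y) = pform S x + pform S y - 1 - bform S x y := by
  unfold pform qform bform
  rw [eform_add_left, eform_add_right, eform_add_right]
  ring

lemma eps_nonneg (S : Setup) (a : V S) : 0 ≤ eps S a := by
  intro b; simp only [eps, Pi.zero_apply]; split_ifs <;> simp

lemma eps_self (S : Setup) (a : V S) : eps S a a = 1 := by simp [eps]

lemma eps_of_ne (S : Setup) {a b : V S} (h : b ≠ a) : eps S a b = 0 := by simp [eps, h]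

lemma eps_ne_zero (S : Setup) (a : V S) : eps S a ≠ 0 := fun h => by
  have := congrFun h a
  simp [eps] at this

/-! ### Reflections -/

lemma refl1_eq (S : Setup) (a : V S) (x : V S → ℤ) :
    refl1 S a x = x - bform S x (eps S a) • eps S a := by
  funext b; simp [refl1]

/-- The reflection as a linear map. -/
def sa (S : Setup) (a : V S) : Module.End ℤ (V S → ℤ) where
  toFun := refl1 S a
  map_add' x y := by
    simp only [refl1_eq, bform_add_left, add_smul]; abel
  map_smul' c x := by
    simp only [refl1_eq, bform_smul_left, mul_smul, smul_sub, RingHom.id_apply]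

lemma sa_apply (S : Setup) (a : V S) (x : V S → ℤ) :
    sa S a x = x - bform S x (eps S a) • eps S a := refl1_eq S a x

lemma refl1_sa (S : Setup) (a : V S) (x : V S → ℤ) : refl1 S a x = sa S a x := rfl

lemma sa_sa (S : Setup) (a : V S) (x : V S → ℤ) : sa S a (sa S a x) = x := by
  simp only [sa_apply, bform_sub_left, bform_smul_left, bform_eps_self]
  module

lemma sa_eps_self (S : Setup) (a : V S) : sa S a (eps S a) = - eps S a := by
  simp only [sa_apply, bform_eps_self]; module

lemma bform_sa (S : Setup) (a : V S) (x y : V S → ℤ) :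
    bform S (sa S a x) (sa S a y) = bform S x y := by
  simp only [sa_apply, bform_sub_left, bform_sub_right, bform_smul_left, bform_smul_right,
    bform_eps_self]
  rw [bform_symm S (eps S a) y]; ring

lemma sa_apply_ne (S : Setup) {a b : V S} (h : b ≠ a) (x : V S → ℤ) : sa S a x b = x b := by
  simp [sa_apply, eps_of_ne S h]

/-! ### The Coxeter group -/

/-- The Cartan number. -/
def cn (S : Setup) (a b : V S) : ℕ := arr S a b + arr S b a

lemma cn_symm (S : Setup) (a b : V S) : cn S a b = cn S b a := by unfold cn; ring

/-- The Coxeter matrix of the Weyl group. -/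
def CM (S : Setup) : CoxeterMatrix (V S) where
  M := Matrix.of fun a b => if a = b then 1 else if cn S a b = 0 then 2 else
    if cn S a b = 1 then 3 else 0
  isSymm := by
    ext a b
    simp only [Matrix.transpose_apply, Matrix.of_apply, cn_symm S a b, eq_comm (a := a)]
  diagonal := by intro i; simp
  off_diagonal := by
    intro i j h
    simp only [Matrix.of_apply, h, if_false]
    split_ifs <;> simp

lemma CM_apply (S : Setup) (a b : V S) : CM S a b = if a = b then 1 else if cn S a b = 0 then 2 else
    if cn S a b = 1 then 3 else 0 := rfl

lemma bform_eps_cn (S : Setup) {a b : V S} (h : a ≠ b) :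
    bform S (eps S a) (eps S b) = -(cn S a b : ℤ) := bform_eps_ne S h

lemma liftable (S : Setup) : (CM S).IsLiftable (sa S) := by
  intro a b
  rw [CM_apply]
  split_ifs with h h0 h1
  · subst h
    refine LinearMap.ext fun x => ?_
    simp [sa_sa]
  · refine LinearMap.ext fun x => ?_
    have hab := bform_eps_cn S h
    have hba := bform_eps_cn S (Ne.symm h)
    rw [cn_symm, h0] at hba
    rw [h0] at hab
    simp only [pow_succ, pow_zero, one_mul, Module.End.mul_apply, Module.End.one_apply, sa_apply,
      bform_sub_left, bform_smul_left, bform_eps_self, hab, hba]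
    push_cast
    module
  · refine LinearMap.ext fun x => ?_
    have hab := bform_eps_cn S h
    have hba := bform_eps_cn S (Ne.symm h)
    rw [cn_symm, h1] at hba
    rw [h1] at hab
    simp only [pow_succ, pow_zero, one_mul, Module.End.mul_apply, Module.End.one_apply, sa_apply,
      bform_sub_left, bform_smul_left, bform_eps_self, hab, hba]
    push_cast
    module
  · simp

/-- The Coxeter system of the quiver. -/
def cs (S : Setup) : CoxeterSystem (CM S) (CM S).Group := (CM S).toCoxeterSystem

/-- The reflection representation. -/
def rho (S : Setup) : (CM S).Group →* Module.End ℤ (V S → ℤ) :=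
  (cs S).lift ⟨sa S, liftable S⟩

lemma rho_simple (S : Setup) (a : V S) : rho S ((cs S).simple a) = sa S a :=
  (cs S).lift_apply_simple (liftable S) a

lemma rho_mul_simple (S : Setup) (w : (CM S).Group) (a : V S) (x : V S → ℤ) :
    rho S (w * (cs S).simple a) x = rho S w (sa S a x) := by
  rw [map_mul, rho_simple]; rfl

lemma reflList_rho (S : Setup) (l : List (V S)) (x : V S → ℤ) :
    reflList S l x = rho S ((cs S).wordProd l) x := by
  induction l with
  | nil => simp [reflList]
  | cons a l ih =>
    rw [CoxeterSystem.wordProd_cons, map_mul, rho_simple, Module.End.mul_apply, ← ih]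
    rfl

lemma exists_reflList (S : Setup) (w : (CM S).Group) :
    ∃ l, ∀ x, rho S w x = reflList S l x := by
  obtain ⟨l, rfl⟩ := (cs S).wordProd_surjective w
  exact ⟨l, fun x => (reflList_rho S l x).symm⟩

lemma sa_eps_ne (S : Setup) {a b : V S} (h : a ≠ b) :
    sa S b (eps S a) = eps S a + (cn S a b : ℤ) • eps S b := by
  rw [sa_apply, bform_eps_cn S h]; module

/-- inner step for Cartan number at least two -/
lemma pos_dihedral (S : Setup) (N : ℕ)
    (IH : ∀ w a, (cs S).length w < N → ¬ (cs S).IsRightDescent w a → 0 ≤ rho S w (eps S a)) :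
    ∀ (n : ℕ) (w) (a b : V S) (x y : ℤ), a ≠ b → 2 ≤ cn S a b → (cs S).length w = n → n < N →
      ¬ (cs S).IsRightDescent w a → y ≤ x → 0 ≤ y →
      0 ≤ x • rho S w (eps S a) + y • rho S w (eps S b) := by
  intro n
  induction n with
  | zero =>
    intro w a b x y hab hc hn hN ha hxy hy
    have hw := (cs S).length_eq_zero_iff.1 hn
    have hb : ¬ (cs S).IsRightDescent w b := hw ▸ (cs S).not_isRightDescent_one b
    exact add_nonneg (smul_nonneg (hy.trans hxy) (IH _ _ (by omega) ha))
      (smul_nonneg hy (IH _ _ (by omega) hb))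
  | succ n ih =>
    intro w a b x y hab hc hn hN ha hxy hy
    by_cases hb : (cs S).IsRightDescent w b
    · have hl := (cs S).isRightDescent_iff.1 hb
      have hb' := (cs S).isRightDescent_iff_not_isRightDescent_mul.1 hb
      have h := ih (w * (cs S).simple b) b a (cn S a b * x - y) x hab.symm
        (by rwa [cn_symm]) (by omega) (by omega) hb' (by nlinarith) (by omega)
      have hw : w = (w * (cs S).simple b) * (cs S).simple b := by simp
      set v := w * (cs S).simple b
      clear_value v
      rw [hw, rho_mul_simple, rho_mul_simple, sa_eps_self, sa_eps_ne S hab]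
      refine h.trans_eq ?_
      simp only [map_add, map_neg, map_smul]
      module
    · exact add_nonneg (smul_nonneg (hy.trans hxy) (IH _ _ (by omega) ha))
        (smul_nonneg hy (IH _ _ (by omega) hb))

lemma simple_comm (S : Setup) {a b : V S} (hab : a ≠ b) (h : cn S a b = 0) :
    (cs S).simple a * (cs S).simple b = (cs S).simple b * (cs S).simple a := by
  have h1 := (cs S).simple_mul_simple_pow a b
  rw [CM_apply, if_neg hab, if_pos h, pow_two] at h1
  have := eq_inv_of_mul_eq_one_left h1
  simpa using this

lemma simple_braid (S : Setup) {a b : V S} (hab : a ≠ b) (h : cn S a b = 1) :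
    (cs S).simple a * (cs S).simple b * (cs S).simple a =
      (cs S).simple b * (cs S).simple a * (cs S).simple b := by
  have h1 := (cs S).simple_mul_simple_pow a b
  rw [CM_apply, if_neg hab, if_neg (by omega), if_pos h, pow_succ, pow_two] at h1
  have h2 : ((cs S).simple a * (cs S).simple b * (cs S).simple a) *
     ((cs S).simple b * (cs S).simple a * (cs S).simple b) = 1 := by
    rw [← h1]; group
  have := eq_inv_of_mul_eq_one_left h2
  rw [this]
  simp [mul_assoc]

lemma pos_of_ascent_aux (S : Setup) (N : ℕ) : ∀ w a, (cs S).length w < N →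
    ¬ (cs S).IsRightDescent w a → 0 ≤ rho S w (eps S a) := by
  induction N with
  | zero => intro w a h; omega
  | succ N IH =>
    intro w a hN ha
    by_cases hw1 : w = 1
    · subst hw1; simpa using eps_nonneg S a
    obtain ⟨b, hb⟩ := (cs S).exists_rightDescent_of_ne_one hw1
    have hab : a ≠ b := fun h => ha (h ▸ hb)
    have hl := (cs S).isRightDescent_iff.1 hb
    have hb' := (cs S).isRightDescent_iff_not_isRightDescent_mul.1 hb
    have hw : w = (w * (cs S).simple b) * (cs S).simple b := by simp
    have hla := (cs S).not_isRightDescent_iff.1 ha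
    set v := w * (cs S).simple b with hv
    have hvb := IH v b (by omega) hb'
    have key : rho S w (eps S a) = rho S v (eps S a) + (cn S a b : ℤ) • rho S v (eps S b) := by
      rw [hw, rho_mul_simple, sa_eps_ne S hab, map_add, map_smul]
    rw [key]
    by_cases hva : (cs S).IsRightDescent v a
    swap
    · exact add_nonneg (IH v a (by omega) hva) (smul_nonneg (by positivity) hvb)
    rcases Nat.lt_or_ge (cn S a b) 2 with hc | hc
    swap
    · have := pos_dihedral S N IH ((cs S).length v) v b a (cn S a b) 1 hab.symm
        (by rwa [cn_symm]) rfl (by omega) hb' (by omega) (by omega)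
      refine this.trans_eq ?_
      module
    have hl1 := (cs S).isRightDescent_iff.1 hva
    have hva' := (cs S).isRightDescent_iff_not_isRightDescent_mul.1 hva
    have hw1 : v = (v * (cs S).simple a) * (cs S).simple a := by simp
    set v1 := v * (cs S).simple a with hv1
    rcases Nat.eq_zero_or_pos (cn S a b) with h0 | h0
    · exfalso
      have : w * (cs S).simple a = v1 * (cs S).simple b := by
        rw [hw, hw1]
        simp only [mul_assoc]
        rw [← simple_comm S hab h0]
        simp
      have h2 := (cs S).length_mul_le v1 ((cs S).simple b)
      rw [← this, (cs S).length_simple] at h2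
      omega
    have h1 : cn S a b = 1 := by omega
    by_cases hv1b : (cs S).IsRightDescent v1 b
    · exfalso
      have hl2 := (cs S).isRightDescent_iff.1 hv1b
      have hw2 : v1 = (v1 * (cs S).simple b) * (cs S).simple b := by simp
      set v2 := v1 * (cs S).simple b with hv2
      have : w * (cs S).simple a = v2 * ((cs S).simple a * (cs S).simple b) := by
        have hbr := simple_braid S hab h1
        rw [hw, hw1, hw2]
        calc _ = v2 * ((cs S).simple b * (cs S).simple a * (cs S).simple b) * (cs S).simple a := by
              simp only [mul_assoc]
          _ = _ := by rw [← hbr]; simp [mul_assoc]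
      have h2 := (cs S).length_mul_le v2 ((cs S).simple a * (cs S).simple b)
      have h3 := (cs S).length_mul_le ((cs S).simple a) ((cs S).simple b)
      rw [← this] at h2
      rw [(cs S).length_simple, (cs S).length_simple] at h3
      omega
    · have := IH v1 b (by omega) hv1b
      clear_value v1
      refine this.trans_eq ?_
      rw [h1, hw1, rho_mul_simple, rho_mul_simple, sa_eps_self, sa_eps_ne S hab.symm, cn_symm, h1]
      simp only [map_add, map_neg, map_smul]
      module

lemma pos_of_ascent (S : Setup) (w : (CM S).Group) (a : V S)
    (h : ¬ (cs S).IsRightDescent w a) : 0 ≤ rho S w (eps S a) :=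
  pos_of_ascent_aux S _ w a (Nat.lt_succ_self _) h

/-! ### Roots -/

lemma real_sign (S : Setup) (w : (CM S).Group) (a : V S) :
    0 ≤ rho S w (eps S a) ∨ rho S w (eps S a) ≤ 0 := by
  by_cases h : (cs S).IsRightDescent w a
  · right
    have h' := (cs S).isRightDescent_iff_not_isRightDescent_mul.1 h
    have := pos_of_ascent S _ a h'
    rw [rho_mul_simple, sa_eps_self, map_neg] at this
    exact neg_nonneg.1 this
  · exact Or.inl (pos_of_ascent S w a h)

lemma antidom_le (S : Setup) (x : V S → ℤ) (hx : ∀ a, bform S x (eps S a) ≤ 0) :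
    ∀ (n : ℕ) (w : (CM S).Group), (cs S).length w = n → x ≤ rho S w x := by
  intro n
  induction n with
  | zero =>
    intro w hw
    rw [(cs S).length_eq_zero_iff.1 hw]; simp
  | succ n ih =>
    intro w hw
    have hw1 : w ≠ 1 := by rintro rfl; simp at hw
    obtain ⟨b, hb⟩ := (cs S).exists_rightDescent_of_ne_one hw1
    have hl := (cs S).isRightDescent_iff.1 hb
    have hb' := (cs S).isRightDescent_iff_not_isRightDescent_mul.1 hb
    have hwv : w = (w * (cs S).simple b) * (cs S).simple b := by simp
    set v := w * (cs S).simple b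
    clear_value v
    have h1 := ih v (by omega)
    have h2 := pos_of_ascent S v b hb'
    rw [hwv, rho_mul_simple, sa_apply, map_sub, map_smul]
    have h3 : 0 ≤ (-bform S x (eps S b)) • rho S v (eps S b) :=
      smul_nonneg (by have := hx b; omega) h2
    calc x ≤ rho S v x := h1
      _ ≤ rho S v x + (-bform S x (eps S b)) • rho S v (eps S b) := le_add_of_nonneg_right h3
      _ = _ := by module

lemma rho_inv_apply (S : Setup) (w : (CM S).Group) (x : V S → ℤ) :
    rho S w⁻¹ (rho S w x) = x := by
  rw [← Module.End.mul_apply, ← map_mul]; simp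

lemma bform_reflList (S : Setup) (l : List (V S)) (x y : V S → ℤ) :
    bform S (reflList S l x) (reflList S l y) = bform S x y := by
  induction l with
  | nil => rfl
  | cons a l ih => exact (bform_sa S a _ _).trans ih

lemma reflList_neg (S : Setup) (l : List (V S)) (x : V S → ℤ) :
    reflList S l (-x) = - reflList S l x := by
  rw [reflList_rho, reflList_rho, map_neg]

lemma fund_le (S : Setup) {x : V S → ℤ} (hx : fund S x) (l : List (V S)) :
    x ≤ reflList S l x := by
  rw [reflList_rho]
  exact antidom_le S x hx.2.2.2 _ _ rfl

lemma bform_self_nonpos (S : Setup) {x : V S → ℤ} (h0 : 0 ≤ x)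
    (hx : ∀ a, bform S x (eps S a) ≤ 0) : bform S x x ≤ 0 := by
  rw [bform_eq_sum]
  refine Finset.sum_nonpos fun a _ => ?_
  rw [bform_symm]
  exact mul_nonpos_of_nonneg_of_nonpos (h0 a) (hx a)

lemma root_norm (S : Setup) {x : V S → ℤ} (hx : isRoot S x) :
    bform S x x = 2 ∨ bform S x x ≤ 0 := by
  rcases hx with ⟨l, a, rfl⟩ | ⟨l, γ, h | h, rfl⟩
  · left; rw [bform_reflList, bform_eps_self]
  · right; rw [bform_reflList]; exact bform_self_nonpos S h.2.1 h.2.2.2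
  · right
    rw [bform_reflList]
    have := bform_self_nonpos S h.2.1 h.2.2.2
    rwa [bform_neg_left, bform_symm, bform_neg_left, neg_neg] at this

lemma root_sign (S : Setup) {x : V S → ℤ} (hx : isRoot S x) : 0 ≤ x ∨ x ≤ 0 := by
  rcases hx with ⟨l, a, rfl⟩ | ⟨l, γ, h | h, rfl⟩
  · rw [reflList_rho]; exact real_sign S _ a
  · left; exact le_trans (show 0 ≤ γ from h.2.1) (fund_le S h l)
  · right
    have h1 := fund_le S h l
    rw [reflList_neg] at h1
    exact le_trans (neg_le_neg_iff.1 h1) (neg_nonneg.1 (show 0 ≤ -γ from h.2.1))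

lemma reflList_ne_zero (S : Setup) {x : V S → ℤ} (hx : x ≠ 0) (l : List (V S)) :
    reflList S l x ≠ 0 := by
  intro h
  rw [reflList_rho] at h
  have := rho_inv_apply S ((cs S).wordProd l) x
  rw [h, map_zero] at this
  exact hx this.symm

lemma root_ne_zero (S : Setup) {x : V S → ℤ} (hx : isRoot S x) : x ≠ 0 := by
  rcases hx with ⟨l, a, rfl⟩ | ⟨l, γ, h | h, rfl⟩
  · exact reflList_ne_zero S (eps_ne_zero S a) l
  · exact reflList_ne_zero S h.1 l
  · exact reflList_ne_zero S (fun h' => h.1 (by rw [h', neg_zero])) l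

lemma root_sa (S : Setup) {x : V S → ℤ} (hx : isRoot S x) (a : V S) : isRoot S (sa S a x) := by
  rcases hx with ⟨l, b, rfl⟩ | ⟨l, γ, h, rfl⟩
  · exact Or.inl ⟨a :: l, b, rfl⟩
  · exact Or.inr ⟨a :: l, γ, h, rfl⟩

lemma eps_root (S : Setup) (a : V S) : isPosRoot S (eps S a) :=
  ⟨Or.inl ⟨[], a, rfl⟩, eps_nonneg S a⟩

lemma posRoot_sa (S : Setup) {x : V S → ℤ} (hx : isPosRoot S x) {a : V S} (h : x ≠ eps S a) :
    isPosRoot S (sa S a x) := by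
  have hr := root_sa S hx.1 a
  refine ⟨hr, ?_⟩
  rcases root_sign S hr with h1 | h1
  · exact h1
  exfalso
  have hz : ∀ b, b ≠ a → x b = 0 := fun b hb => by
    have h2 := h1 b
    rw [sa_apply_ne S hb] at h2
    exact le_antisymm h2 (hx.2 b)
  have hxa : x = x a • eps S a := by
    funext b
    by_cases hb : b = a
    · subst hb; simp [eps_self]
    · simp [eps_of_ne S hb, hz b hb]
  have hne : x a ≠ 0 := fun h0 => root_ne_zero S hx.1 (by rw [hxa, h0, zero_smul])
  have hpos : 0 < x a := lt_of_le_of_ne (hx.2 a) (Ne.symm hne)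
  have hn : bform S x x = 2 * (x a * x a) := by
    conv_lhs => rw [hxa]
    rw [bform_smul_left, bform_smul_right, bform_eps_self]; ring
  rcases root_norm S hx.1 with h2 | h2
  · have : x a = 1 := by nlinarith
    exact h (by rw [hxa, this, one_smul])
  · nlinarith

/-! ### Height and supports -/

/-- height -/
def ht (S : Setup) (x : V S → ℤ) : ℤ := ∑ a, x a

lemma ht_add (S : Setup) (x y : V S → ℤ) : ht S (x + y) = ht S x + ht S y := by
  simp [ht, Finset.sum_add_distrib]

lemma ht_sa (S : Setup) (a : V S) (x : V S → ℤ) :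
    ht S (sa S a x) = ht S x - bform S x (eps S a) := by
  simp [ht, sa_apply, Finset.sum_sub_distrib, ← Finset.mul_sum, eps]

lemma ht_nonneg (S : Setup) {x : V S → ℤ} (hx : 0 ≤ x) : 0 ≤ ht S x :=
  Finset.sum_nonneg fun a _ => hx a

lemma ht_pos (S : Setup) {x : V S → ℤ} (hx : 0 ≤ x) (h : x ≠ 0) : 0 < ht S x := by
  refine lt_of_le_of_ne (ht_nonneg S hx) fun h0 => h ?_
  funext a
  exact (Finset.sum_eq_zero_iff_of_nonneg (fun a _ => hx a)).1 h0.symm a (Finset.mem_univ a)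

/-- disjoint and nonadjacent supports -/
def nonadj (S : Setup) (y z : V S → ℤ) : Prop :=
  ∀ a b, y a ≠ 0 → z b ≠ 0 → a ≠ b ∧ cn S a b = 0

lemma nonadj.symm {S : Setup} {y z : V S → ℤ} (h : nonadj S y z) : nonadj S z y :=
  fun a b ha hb => ⟨(h b a hb ha).1.symm, by rw [cn_symm]; exact (h b a hb ha).2⟩

lemma nonadj.bform_eps {S : Setup} {y z : V S → ℤ} (h : nonadj S y z) {a : V S} (ha : y a ≠ 0) :
    bform S z (eps S a) = 0 := by
  rw [bform_eq_sum]
  refine Finset.sum_eq_zero fun b _ => ?_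
  by_cases hb : z b = 0
  · simp [hb]
  · obtain ⟨h1, h2⟩ := h a b ha hb
    rw [bform_eps_cn S h1.symm, cn_symm, h2]; simp

lemma nonadj.bform_eq {S : Setup} {y z : V S → ℤ} (h : nonadj S y z) :
    bform S y z = 0 := by
  rw [bform_eq_sum]
  refine Finset.sum_eq_zero fun b _ => ?_
  by_cases hb : y b = 0
  · simp [hb]
  · rw [bform_symm, h.bform_eps hb, mul_zero]

lemma bform_eps_nonpos (S : Setup) {x : V S → ℤ} (hx : 0 ≤ x) {a : V S} (ha : x a = 0) :
    bform S x (eps S a) ≤ 0 := by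
  rw [bform_eq_sum]
  refine Finset.sum_nonpos fun b _ => ?_
  by_cases hb : b = a
  · subst hb; simp [ha]
  · rw [bform_eps_cn S hb]
    exact mul_nonpos_of_nonneg_of_nonpos (hx b) (by simp)

lemma conn_nonsplit (S : Setup) {x y z : V S → ℤ} (hc : connSupp S x) (hy : 0 ≤ y) (hz : 0 ≤ z)
    (h : x = y + z) (hn : nonadj S y z) : y = 0 ∨ z = 0 := by
  by_contra hcon
  push Not at hcon
  obtain ⟨a, ha⟩ := Function.ne_iff.1 hcon.1
  obtain ⟨b, hb⟩ := Function.ne_iff.1 hcon.2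
  have ha' : y a ≠ 0 := ha
  have hb' : z b ≠ 0 := hb
  have hsup : ∀ c, (y c ≠ 0 ∨ z c ≠ 0) ↔ c ∈ supp S x := by
    intro c
    have h1 := hy c
    have h2 := hz c
    simp only [supp, Set.mem_setOf_eq, h, Pi.add_apply, Pi.zero_apply] at *
    omega
  have hr := hc a ((hsup a).1 (Or.inl ha')) b ((hsup b).1 (Or.inr hb'))
  have : ∀ c, Relation.ReflTransGen
      (fun u v => (0 < arr S u v + arr S v u) ∧ u ∈ supp S x ∧ v ∈ supp S x) a c → y c ≠ 0 := by
    intro c hac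
    induction hac with
    | refl => exact ha'
    | tail _ h2 ih =>
      obtain ⟨h3, _, h5⟩ := h2
      rcases (hsup _).2 h5 with h6 | h6
      · exact h6
      · have := (hn _ _ ih h6).2
        unfold cn at this; omega
  exact (hn b b (this b hr) hb').1 rfl

lemma exists_split (S : Setup) {x : V S → ℤ} (hx : 0 ≤ x) (hc : ¬ connSupp S x) :
    ∃ y z : V S → ℤ, 0 ≤ y ∧ 0 ≤ z ∧ y ≠ 0 ∧ z ≠ 0 ∧ x = y + z ∧ nonadj S y z := by
  classical
  unfold connSupp at hc
  push Not at hc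
  obtain ⟨a, ha, b, hb, hab⟩ := hc
  set r := Relation.ReflTransGen
      (fun u v => (0 < arr S u v + arr S v u) ∧ u ∈ supp S x ∧ v ∈ supp S x) with hr
  refine ⟨fun c => if r a c then x c else 0, fun c => if r a c then 0 else x c, ?_, ?_, ?_, ?_,
    ?_, ?_⟩
  · intro c; have := hx c; dsimp only; split_ifs <;> simp_all
  · intro c; have := hx c; dsimp only; split_ifs <;> simp_all
  · intro h
    have h1 := congrFun h a
    have : r a a := Relation.ReflTransGen.refl
    simp only [this, if_true] at h1
    exact ha h1
  · intro h
    have h1 := congrFun h b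
    simp only [hab, if_false] at h1
    exact hb h1
  · funext c; simp only [Pi.add_apply]; split_ifs <;> simp
  · intro c d hc hd
    have hc1 : r a c := by by_contra h; simp [h] at hc
    have hd1 : ¬ r a d := by intro h; simp [h] at hd
    simp only [hc1, hd1, if_true, if_false] at hc hd
    refine ⟨fun h => hd1 (h ▸ hc1), ?_⟩
    by_contra hcn
    exact hd1 (hc1.tail ⟨Nat.pos_of_ne_zero hcn, hc, hd⟩)

lemma posRoot_conn (S : Setup) : ∀ (n : ℕ) (x : V S → ℤ), (ht S x).toNat = n → isPosRoot S x →
    connSupp S x := by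
  intro n
  induction n using Nat.strong_induction_on with
  | _ n ih =>
  intro x hn hx
  have hx0 : 0 ≤ x := hx.2
  by_cases hdom : ∀ a, bform S x (eps S a) ≤ 0
  · have hne := root_ne_zero S hx.1
    have hnp := bform_self_nonpos S hx0 hdom
    rcases hx.1 with ⟨l, a, h⟩ | ⟨l, γ, h | h, hxe⟩
    · rw [h, bform_reflList, bform_eps_self] at hnp; omega
    · have h1 : γ ≤ x := hxe ▸ fund_le S h l
      have h2 : x ≤ γ := by
        have := antidom_le S x hdom _ ((cs S).wordProd l)⁻¹ rfl
        rwa [hxe, reflList_rho, rho_inv_apply, ← reflList_rho, ← hxe] at this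
      rw [le_antisymm h2 h1]; exact h.2.2.1
    · exfalso
      have h1 := fund_le S h l
      rw [reflList_neg, ← hxe] at h1
      have h2 : x ≤ 0 := (neg_le_neg_iff.1 h1).trans (neg_nonneg.1 (show 0 ≤ -γ from h.2.1))
      exact hne (le_antisymm h2 hx0)
  push Not at hdom
  obtain ⟨a, ha⟩ := hdom
  by_cases hxa : x = eps S a
  · subst hxa
    intro b hb c hc
    have : ∀ d, d ∈ supp S (eps S a) → d = a := fun d hd => by
      by_contra h; exact hd (eps_of_ne S h)
    rw [this b hb, this c hc]
  have hs := posRoot_sa S hx hxa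
  have hs0 : 0 ≤ sa S a x := hs.2
  have hh := ht_sa S a x
  have hcs := ih _ (by have := ht_nonneg S hs0; omega) _ rfl hs
  by_contra hnc
  obtain ⟨y, z, hy, hz, hy0, hz0, hxyz, hna⟩ := exists_split S hx0 hnc
  have main : ∀ y z : V S → ℤ, 0 ≤ y → 0 ≤ z → y ≠ 0 → z ≠ 0 → x = y + z → nonadj S y z →
      y a = 0 := by
    clear! y z
    intro y z hy hz hy0 hz0 hxyz hna
    by_contra hya
    have hza := hna.bform_eps hya
    have hza0 : z a = 0 := by
      by_contra h; exact (hna a a hya h).1 rfl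
    have hsz : sa S a z = z := by rw [sa_apply, hza]; simp
    have hsx : sa S a x = sa S a y + z := by rw [hxyz, map_add, hsz]
    have hsy : 0 ≤ sa S a y := by
      intro b
      by_cases hb : b = a
      · subst hb
        have := hs0 b
        rwa [hsx, Pi.add_apply, hza0, add_zero] at this
      · rw [sa_apply_ne S hb]; exact hy b
    rcases conn_nonsplit S hcs hsy hz hsx (fun b c hb hc => by
      refine hna b c ?_ hc
      by_cases hba : b = a
      · rwa [hba]
      · rwa [sa_apply_ne S hba] at hb) with h | h
    · apply hy0
      rw [← sa_sa S a y, h, map_zero]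
    · exact hz0 h
  have h1 := main y z hy hz hy0 hz0 hxyz hna
  have h2 := main z y hz hy hz0 hy0 (hxyz.trans (add_comm _ _)) hna.symm
  have h3 := bform_eps_nonpos S hx0 (a := a) (by rw [hxyz]; simp [h1, h2])
  omega

/-! ### Sums of roots in a sublattice -/

/-- Positive roots in a sublattice. -/
def RM (S : Setup) (M : AddSubgroup (V S → ℤ)) : Set (V S → ℤ) := {x | isPosRoot S x ∧ x ∈ M}

/-- Sums of positive roots in a sublattice. -/
def NR (S : Setup) (M : AddSubgroup (V S → ℤ)) : AddSubmonoid (V S → ℤ) :=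
  AddSubmonoid.closure (RM S M)

lemma NR_nonneg (S : Setup) {M : AddSubgroup (V S → ℤ)} {x : V S → ℤ} (hx : x ∈ NR S M) :
    0 ≤ x := by
  induction hx using AddSubmonoid.closure_induction with
  | mem x hx => exact hx.1.2
  | zero => exact le_rfl
  | add x y _ _ h1 h2 => exact add_nonneg h1 h2

lemma RM_sa (S : Setup) {M M' : AddSubgroup (V S → ℤ)} {a : V S} (ha : eps S a ∉ M)
    (hM : ∀ x ∈ M, sa S a x ∈ M') {x : V S → ℤ} (hx : x ∈ NR S M) : sa S a x ∈ NR S M' := by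
  induction hx using AddSubmonoid.closure_induction with
  | mem x hx =>
    exact AddSubmonoid.subset_closure
      ⟨posRoot_sa S hx.1 (fun h => ha (h ▸ hx.2)), hM x hx.2⟩
  | zero => rw [map_zero]; exact zero_mem _
  | add x y _ _ h1 h2 => rw [map_add]; exact add_mem h1 h2

lemma NR_sub_eps (S : Setup) {M : AddSubgroup (V S → ℤ)} {a : V S} (ha : eps S a ∈ M)
    {x : V S → ℤ} (hx : x ∈ NR S M) : 0 < bform S x (eps S a) → x - eps S a ∈ NR S M := by
  have he : eps S a ∈ NR S M := AddSubmonoid.subset_closure ⟨eps_root S a, ha⟩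
  induction hx using AddSubmonoid.closure_induction with
  | mem x hx =>
    intro hp
    by_cases h : x = eps S a
    · rw [h, sub_self]; exact zero_mem _
    · have h1 := posRoot_sa S hx.1 h
      have h2 : sa S a x ∈ M := by
        rw [sa_apply]; exact sub_mem hx.2 (zsmul_mem ha _)
      have h3 : sa S a x ∈ NR S M := AddSubmonoid.subset_closure ⟨h1, h2⟩
      obtain ⟨k, hk⟩ : ∃ k : ℕ, bform S x (eps S a) = k + 1 :=
        ⟨(bform S x (eps S a) - 1).toNat, by omega⟩
      have : x - eps S a = sa S a x + k • eps S a := by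
        rw [sa_apply, hk, ← natCast_zsmul]; module
      rw [this]
      exact add_mem h3 (nsmul_mem he k)
  | zero => intro hp; rw [bform_zero_left] at hp; omega
  | add x y hx hy h1 h2 =>
    intro hp
    rw [bform_add_left] at hp
    rcases lt_or_ge 0 (bform S x (eps S a)) with h | h
    · have : x + y - eps S a = (x - eps S a) + y := by abel
      rw [this]; exact add_mem (h1 h) hy
    · have : x + y - eps S a = x + (y - eps S a) := by abel
      rw [this]; exact add_mem hx (h2 (by omega))

lemma NR_split (S : Setup) {M : AddSubgroup (V S → ℤ)} {y z : V S → ℤ} (hna : nonadj S y z)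
    {x : V S → ℤ} (hx : x ∈ NR S M) : (∀ a, x a ≠ 0 → y a ≠ 0 ∨ z a ≠ 0) →
      (fun a => if y a ≠ 0 then x a else 0) ∈ NR S M := by
  induction hx using AddSubmonoid.closure_induction with
  | mem x hx =>
    intro hs
    have hx0 : ∀ a, 0 ≤ x a := hx.1.2
    have hc := posRoot_conn S _ x rfl hx.1
    rcases conn_nonsplit S (y := fun a => if y a ≠ 0 then x a else 0)
      (z := fun a => if y a ≠ 0 then 0 else x a) hc
      (by intro a; dsimp only; split_ifs <;> first | exact hx0 a | exact le_rfl)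
      (by intro a; dsimp only; split_ifs <;> first | exact hx0 a | exact le_rfl)
      (by funext a; simp only [Pi.add_apply]; split_ifs <;> simp)
      (by
        intro b c hb hc
        have hb1 : y b ≠ 0 := by intro h; simp [h] at hb
        have hc1 : y c = 0 := by by_contra h; simp [h] at hc
        simp only [hc1, ne_eq, not_true_eq_false, if_false] at hc
        exact hna b c hb1 ((hs c hc).resolve_left (by simp [hc1]))) with h | h
    · rw [h]; exact zero_mem _
    · have : (fun a => if y a ≠ 0 then x a else 0) = x := by
        funext a
        have h3 := congrFun h a
        simp only [Pi.zero_apply] at h3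
        by_cases hya : y a = 0
        · rw [if_neg (not_not.2 hya)] at h3
          rw [if_neg (not_not.2 hya), h3]
        · rw [if_pos hya]
      rw [this]; exact AddSubmonoid.subset_closure hx
  | zero =>
    intro _
    have : (fun a => if y a ≠ 0 then (0 : V S → ℤ) a else 0) = 0 := by funext a; simp
    rw [this]; exact zero_mem _
  | add u v hu hv h1 h2 =>
    intro hs
    have hu0 := NR_nonneg S hu
    have hv0 := NR_nonneg S hv
    have e : (fun a => if y a ≠ 0 then (u + v) a else 0) =
        (fun a => if y a ≠ 0 then u a else 0) + (fun a => if y a ≠ 0 then v a else 0) := by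
      funext a; simp only [Pi.add_apply]; split_ifs <;> simp
    rw [e]
    refine add_mem (h1 fun a ha => hs a ?_) (h2 fun a ha => hs a ?_)
    all_goals
      have := hu0 a
      have := hv0 a
      simp only [Pi.zero_apply, Pi.add_apply] at *
      omega

/-- The numerical condition in the theorem. -/
def cond (S : Setup) (M : AddSubgroup (V S → ℤ)) (x : V S → ℤ) : Prop :=
  ∀ β, β ∈ NR S M → x - β ∈ NR S M → β ≠ 0 → x - β ≠ 0 → bform S β (x - β) ≤ -2

lemma root_of_cond (S : Setup) : ∀ (n : ℕ) (M : AddSubgroup (V S → ℤ)) (x : V S → ℤ),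
    (ht S x).toNat = n → x ≠ 0 → x ∈ NR S M → cond S M x → isRoot S x := by
  intro n
  induction n using Nat.strong_induction_on with
  | _ n ih =>
  intro M x hn hne hx hc
  have hx0 := NR_nonneg S hx
  by_cases hdom : ∀ a, bform S x (eps S a) ≤ 0
  · refine Or.inr ⟨[], x, Or.inl ⟨hne, hx0, ?_, hdom⟩, rfl⟩
    by_contra hnc
    obtain ⟨y, z, hy, hz, hy0, hz0, hxyz, hna⟩ := exists_split S hx0 hnc
    have hyz : ∀ a, x a ≠ 0 → y a ≠ 0 ∨ z a ≠ 0 := by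
      intro a ha
      by_contra h
      push Not at h
      exact ha (by rw [hxyz]; simp [h.1, h.2])
    have hyN := NR_split S hna hx hyz
    have hzN := NR_split S hna.symm hx (fun a ha => (hyz a ha).symm)
    have ey : (fun a => if y a ≠ 0 then x a else 0) = y := by
      funext a
      split_ifs with h
      · have : z a = 0 := by by_contra h'; exact (hna a a h h').1 rfl
        simp [hxyz, this]
      · push Not at h; exact h.symm
    have ez : (fun a => if z a ≠ 0 then x a else 0) = z := by
      funext a
      split_ifs with h
      · have : y a = 0 := by by_contra h'; exact (hna a a h' h).1 rfl
        simp [hxyz, this]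
      · push Not at h; exact h.symm
    rw [ey] at hyN
    rw [ez] at hzN
    have exz : x - y = z := by rw [hxyz]; abel
    have := hc y hyN (exz ▸ hzN) hy0 (exz ▸ hz0)
    rw [exz, hna.bform_eq] at this
    omega
  push Not at hdom
  obtain ⟨a, ha⟩ := hdom
  by_cases haM : eps S a ∈ M
  · by_cases hxa : x = eps S a
    · rw [hxa]; exact (eps_root S a).1
    · exfalso
      have h1 := hc (eps S a) (AddSubmonoid.subset_closure ⟨eps_root S a, haM⟩)
        (NR_sub_eps S haM hx ha) (eps_ne_zero S a) (sub_ne_zero.2 hxa)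
      rw [bform_sub_right, bform_eps_self, bform_symm] at h1
      omega
  · set M' : AddSubgroup (V S → ℤ) := M.comap (sa S a).toAddMonoidHom with hM'
    have hmem : ∀ y, y ∈ M' ↔ sa S a y ∈ M := fun y => Iff.rfl
    have haM' : eps S a ∉ M' := by
      rw [hmem, sa_eps_self, neg_mem_iff]; exact haM
    have hto : ∀ y ∈ NR S M, sa S a y ∈ NR S M' := fun y hy =>
      RM_sa S haM (fun u hu => by rw [hmem, sa_sa]; exact hu) hy
    have hfrom : ∀ y ∈ NR S M', sa S a y ∈ NR S M := fun y hy =>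
      RM_sa S haM' (fun u hu => (hmem u).1 hu) hy
    have hnz : ∀ y : V S → ℤ, y ≠ 0 → sa S a y ≠ 0 := fun y hy h => hy (by
      rw [← sa_sa S a y, h, map_zero])
    have hsx := hto x hx
    have hh := ht_sa S a x
    have h1 := ih _ (by have := ht_nonneg S (NR_nonneg S hsx); omega) M' (sa S a x) rfl
      (hnz x hne) hsx (by
        intro β hβ hβ' h0 h0'
        have e : sa S a (sa S a x - β) = x - sa S a β := by rw [map_sub, sa_sa]
        have := hc (sa S a β) (hfrom β hβ) (e ▸ hfrom _ hβ') (hnz _ h0) (e ▸ hnz _ h0')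
        rw [← bform_sa S a, map_sub, sa_sa] 
        exact this)
    have := root_sa S h1 a
    rwa [sa_sa] at this

lemma NR_mem (S : Setup) {M : AddSubgroup (V S → ℤ)} {x : V S → ℤ} (hx : x ∈ NR S M) :
    x ∈ M := by
  induction hx using AddSubmonoid.closure_induction with
  | mem x hx => exact hx.2
  | zero => exact zero_mem _
  | add x y _ _ h1 h2 => exact add_mem h1 h2

lemma exists_decomp (S : Setup) (M : AddSubgroup (V S → ℤ)) : ∀ (n : ℕ) (x : V S → ℤ),
    (ht S x).toNat = n → x ≠ 0 → x ∈ NR S M →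
    ∃ l : List (V S → ℤ), l ≠ [] ∧ (∀ y ∈ l, y ∈ RM S M) ∧ l.sum = x ∧
      pform S x ≤ (l.map (pform S)).sum := by
  intro n
  induction n using Nat.strong_induction_on with
  | _ n ih =>
  intro x hn hne hx
  by_cases hc : cond S M x
  · have hr := root_of_cond S _ M x rfl hne hx hc
    exact ⟨[x], by simp, by simpa using ⟨⟨hr, NR_nonneg S hx⟩, NR_mem S hx⟩, by simp, by simp⟩
  unfold cond at hc
  push Not at hc
  obtain ⟨β, hβ, hγ, hβ0, hγ0, hb⟩ := hc
  have e : x = β + (x - β) := by abel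
  set γ := x - β
  clear_value γ
  have p1 := ht_pos S (NR_nonneg S hβ) hβ0
  have p2 := ht_pos S (NR_nonneg S hγ) hγ0
  have p3 := ht_add S β γ
  rw [← e] at p3
  obtain ⟨l1, a1, b1, c1, d1⟩ := ih _ (by omega) β rfl hβ0 hβ
  obtain ⟨l2, a2, b2, c2, d2⟩ := ih _ (by omega) γ rfl hγ0 hγ
  refine ⟨l1 ++ l2, by simp [a1], ?_, by simp [c1, c2, e], ?_⟩
  · intro y hy
    rcases List.mem_append.1 hy with h | h
    · exact b1 y h
    · exact b2 y h
  · rw [List.map_append, List.sum_append, e, pform_add]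
    omega

/-- The sublattice of the theorem. -/
def ML (S : Setup) (μ : V S → ℂ) : AddSubgroup (V S → ℤ) where
  carrier := {x | inL S x ∧ dotC S x μ = 0}
  zero_mem' := ⟨fun i _ => by simp, by simp [dotC]⟩
  add_mem' := by
    rintro x y ⟨h1, h2⟩ ⟨h3, h4⟩
    refine ⟨fun i hi => ?_, ?_⟩
    · simp only [Pi.add_apply, Finset.sum_add_distrib, h1 i hi, h3 i hi]
    · unfold dotC at *
      simp only [Pi.add_apply, Int.cast_add, add_mul, Finset.sum_add_distrib, h2, h4, add_zero]
  neg_mem' := by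
    rintro x ⟨h1, h2⟩
    refine ⟨fun i hi => ?_, ?_⟩
    · simp only [Pi.neg_apply, Finset.sum_neg_distrib, h1 i hi]
    · unfold dotC at *
      simp only [Pi.neg_apply, Int.cast_neg, neg_mul, Finset.sum_neg_distrib, h2, neg_zero]

lemma inRt_iff (S : Setup) (μ : V S → ℂ) (x : V S → ℤ) : inRt S μ x ↔ x ∈ RM S (ML S μ) :=
  Iff.rfl

lemma inNRt_iff (S : Setup) (μ : V S → ℂ) (x : V S → ℤ) : inNRt S μ x ↔ x ∈ NR S (ML S μ) := by
  constructor
  · rintro ⟨r, γ, h, rfl⟩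
    exact sum_mem fun t _ => AddSubmonoid.subset_closure (h t)
  · intro h
    obtain ⟨l, hl, rfl⟩ := AddSubmonoid.exists_list_of_mem_closure h
    refine ⟨l.length, l.get, fun t => hl _ (List.get_mem _ _), ?_⟩
    rw [← List.sum_ofFn, List.ofFn_get]

/-- For `α ∈ L⁺`: `α ∈ Σ̃_λ` iff `α ≠ 0`, `α ∈ ℕR̃⁺_λ`, and `(β, α-β) ≤ -2`
whenever `β` and `α-β` are both nonzero elements of `ℕR̃⁺_λ`. -/
theorem statement9 (S : Setup) (lamda : V S → ℂ) (α : V S → ℤ) (hα : inLpos S α) :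
    inSig S lamda α ↔
      (α ≠ 0 ∧ inNRt S lamda α ∧
        ∀ β : V S → ℤ, inNRt S lamda β → inNRt S lamda (α - β) →
          β ≠ 0 → α - β ≠ 0 → bform S β (α - β) ≤ -2) := by
  simp only [inNRt_iff]
  constructor
  · rintro ⟨hR, hp⟩
    refine ⟨root_ne_zero S hR.1.1, AddSubmonoid.subset_closure hR, ?_⟩
    intro β hβ hγ hβ0 hγ0
    have e : α = β + (α - β) := by abel
    set γ := α - β
    clear_value γ
    obtain ⟨l1, a1, b1, c1, d1⟩ := exists_decomp S _ _ β rfl hβ0 hβ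
    obtain ⟨l2, a2, b2, c2, d2⟩ := exists_decomp S _ _ γ rfl hγ0 hγ
    have n1 := List.length_pos_of_ne_nil a1
    have n2 := List.length_pos_of_ne_nil a2
    have h := hp (l1 ++ l2).length (by rw [List.length_append]; omega) (l1 ++ l2).get
      (fun t => by
        rw [inRt_iff]
        rcases List.mem_append.1 (List.get_mem (l1 ++ l2) t) with h | h
        · exact b1 _ h
        · exact b2 _ h)
      (by rw [← List.sum_ofFn, List.ofFn_get, List.sum_append, c1, c2, e])
    have h2 : ∑ t, pform S ((l1 ++ l2).get t) = ((l1 ++ l2).map (pform S)).sum := by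
      rw [← List.sum_ofFn, List.ofFn_comp' (l1 ++ l2).get (pform S), List.ofFn_get]
    rw [h2, List.map_append, List.sum_append, e, pform_add] at h
    omega
  · rintro ⟨hne, hN, hc⟩
    refine ⟨⟨⟨root_of_cond S _ _ α rfl hne hN hc, hα.2⟩, NR_mem S hN⟩, ?_⟩
    intro r hr γ hγ hsum
    have hbound : ∀ t, bform S (γ t) (α - γ t) ≤ -2 := by
      intro t
      have e : α - γ t = ∑ s ∈ Finset.univ.erase t, γ s := by
        rw [hsum, ← Finset.add_sum_erase _ _ (Finset.mem_univ t)]; abel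
      refine hc _ (AddSubmonoid.subset_closure (hγ t)) ?_ (root_ne_zero S (hγ t).1.1) ?_
      · rw [e]; exact sum_mem fun s _ => AddSubmonoid.subset_closure (hγ s)
      · haveI : Nontrivial (Fin r) := Fin.nontrivial_iff_two_le.2 hr
        obtain ⟨s, hs⟩ := exists_ne t
        intro h0
        rw [e] at h0
        have h1 := (Finset.sum_eq_zero_iff_of_nonneg
          (fun u _ => (show 0 ≤ γ u from (hγ u).1.2))).1 h0 s (by simp [hs])
        exact root_ne_zero S (hγ s).1.1 h1
    have h1 : ∑ t, bform S (γ t) (α - γ t) ≤ ∑ _t : Fin r, (-2 : ℤ) :=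
      Finset.sum_le_sum fun t _ => hbound t
    have h2 : ∑ t, bform S (γ t) (α - γ t) = bform S α α - ∑ t, bform S (γ t) (γ t) := by
      simp only [bform_sub_right, Finset.sum_sub_distrib]
      rw [← bform_sum_left, ← hsum]
    have h3 : ∑ t, pform S (γ t) = r - ∑ t, qform S (γ t) := by
      simp [pform, Finset.sum_sub_distrib]
    rw [h2] at h1
    simp only [qform_two, ← Finset.mul_sum, Finset.sum_const, Finset.card_univ, Fintype.card_fin,
      nsmul_eq_mul] at h1
    rw [h3]
    unfold pform
    omega

end

end DS
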